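/- Let k ≥ 2 and let n_1, …, n_k be even positive integers with n_i ≠ 2 for all i (i.e., n_i ≥ 4 for all i). Then the signed domination number of the complete k-partite graph K_{n_1,…,n_k} equals 4. -/

import Mathlib

open scoped Classical

/-- The signed domination number of a finite simple graph `G`: the minimum weight of a
function `f : V → {−1, 1}` such that `f(N[v]) ≥ 1` for every vertex `v`. -/
noncomputable def signedDomNum {V : Type*} [Fintype V] (G : SimpleGraph V) : ℤ :=
  sInf {w : ℤ | ∃ f : V → ℤ, (∀ v, f v = 1 ∨ f v = -1) ∧
    (∀ v, 1 ≤ f v + ∑ u ∈ G.neighborFinset v, f u) ∧ w = ∑ v, f v}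

/-- In a complete multipartite graph, the open neighborhood of `v` carries the total weight
minus the weight of the part of `v`. -/
lemma sum_neighborFinset_completeMultipartiteGraph {ι : Type*} [Fintype ι] {V : ι → Type*}
    [∀ i, Fintype (V i)] (f : (Σ i, V i) → ℤ) (v : Σ i, V i)
    [Fintype ((SimpleGraph.completeMultipartiteGraph V).neighborSet v)] :
    ∑ u ∈ (SimpleGraph.completeMultipartiteGraph V).neighborFinset v, f u =
      ∑ u, f u - ∑ j, f ⟨v.1, j⟩ := by
  have hN : (SimpleGraph.completeMultipartiteGraph V).neighborFinset v =
      Finset.univ.filter fun u => ¬ u.1 = v.1 := by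
    ext u
    simp [eq_comm]
  have hpart : ∑ u with u.1 = v.1, f u = ∑ j, f ⟨v.1, j⟩ := by
    rw [Finset.sum_filter, Fintype.sum_sigma, Finset.sum_eq_single v.1]
    · simp
    · intro i _ hi
      simp [hi]
    · simp
  rw [hN, ← hpart, ← Finset.sum_filter_add_sum_filter_not Finset.univ (fun u => u.1 = v.1) f]
  ring

lemma even_sum_of_eq_one_or_neg_one {α : Type*} [Fintype α] (hα : Even (Fintype.card α))
    (f : α → ℤ) (hf : ∀ a, f a = 1 ∨ f a = -1) : Even (∑ a, f a) := by
  have h : Even (∑ a, (f a + 1)) :=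
    Finset.even_sum _ fun a _ => by rcases hf a with h | h <;> simp [h]
  rw [Finset.sum_add_distrib, Int.even_add] at h
  exact h.2 (by simpa using hα)

lemma sum_fin_ite_lt_one_neg_one {m a : ℕ} (ha : a ≤ m) :
    ∑ j : Fin m, (if j.1 < a then (1 : ℤ) else -1) = 2 * a - m := by
  rw [Fin.sum_univ_eq_sum_range (fun j => if j < a then (1 : ℤ) else -1) m]
  obtain ⟨b, rfl⟩ := Nat.exists_eq_add_of_le ha
  rw [Finset.sum_range_add, Finset.sum_congr rfl fun j hj => if_pos (Finset.mem_range.1 hj)]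
  simp
  ring

/-- If every part has even size at least `4`, every signed dominating function of the complete
multipartite graph has weight at least `4`. -/
lemma four_le_sum_of_signedDominating {ι : Type*} [Fintype ι] [Nonempty ι] {V : ι → Type*}
    [∀ i, Fintype (V i)] (hV : ∀ i, Even (Fintype.card (V i)) ∧ 4 ≤ Fintype.card (V i))
    (f : (Σ i, V i) → ℤ) (hf : ∀ v, f v = 1 ∨ f v = -1)
    (hdom : ∀ v, 1 ≤ f v + (∑ u, f u - ∑ j, f ⟨v.1, j⟩)) : 4 ≤ ∑ v, f v := by
  have hpart : ∀ i, Even (∑ j, f ⟨i, j⟩) := fun i =>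
    even_sum_of_eq_one_or_neg_one (hV i).1 _ fun j => hf ⟨i, j⟩
  have htotal : ∑ v, f v = ∑ i, ∑ j, f ⟨i, j⟩ := Fintype.sum_sigma f
  have heven : Even (∑ v, f v) := htotal ▸ Finset.even_sum _ fun i _ => hpart i
  by_cases hneg : ∀ i, ∃ j, f ⟨i, j⟩ = -1
  · have hle : ∀ i, ∑ j, f ⟨i, j⟩ ≤ ∑ v, f v - 2 := fun i => by
      obtain ⟨j, hj⟩ := hneg i
      have := hdom ⟨i, j⟩
      rw [hj] at this
      dsimp only at this
      linarith
    have hsum := Finset.sum_le_sum fun i (_ : i ∈ Finset.univ) => hle i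
    rw [← htotal, Finset.sum_const, Finset.card_univ, nsmul_eq_mul] at hsum
    have hcard : (1 : ℤ) ≤ Fintype.card ι := by exact_mod_cast Fintype.card_pos (α := ι)
    by_contra hlt
    have hle_two : ∑ v, f v ≤ 2 := by
      obtain ⟨m, hm⟩ := heven
      omega
    nlinarith
  · push Not at hneg
    obtain ⟨i, hi⟩ := hneg
    have hone : ∀ j, f ⟨i, j⟩ = 1 := fun j => (hf ⟨i, j⟩).resolve_right (hi j)
    have hcard := (hV i).2
    obtain ⟨j⟩ : Nonempty (V i) := Fintype.card_pos_iff.1 (by omega)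
    have := hdom ⟨i, j⟩
    simp only [hone, Finset.sum_const, Finset.card_univ, nsmul_eq_mul, mul_one] at this
    omega

theorem signedDomNum_eq_four_all_even
    (k : ℕ) (hk : 2 ≤ k) (n : Fin k → ℕ)
    (hn : ∀ i, Even (n i) ∧ 0 < n i ∧ n i ≠ 2) :
    signedDomNum (SimpleGraph.completeMultipartiteGraph fun i : Fin k => Fin (n i)) = 4 := by
  have hn4 : ∀ i, Even (n i) ∧ 4 ≤ n i := fun i => by
    obtain ⟨⟨m, hm⟩, hpos, hne⟩ := hn i
    exact ⟨⟨m, hm⟩, by omega⟩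
  have : Nonempty (Fin k) := ⟨⟨0, by omega⟩⟩
  refine IsLeast.csInf_eq ⟨?_, ?_⟩
  · let f : (Σ i : Fin k, Fin (n i)) → ℤ := fun v =>
      if v.2.1 < n v.1 / 2 + (if v.1.1 < 2 then 1 else 0) then 1 else -1
    have hpart : ∀ i, ∑ j, f ⟨i, j⟩ = if i.1 < 2 then 2 else 0 := fun i => by
      obtain ⟨⟨m, hm⟩, hfour⟩ := hn4 i
      have ha : n i / 2 + (if i.1 < 2 then 1 else 0) ≤ n i := by split_ifs <;> omega
      rw [show ∑ j, f ⟨i, j⟩ = _ from sum_fin_ite_lt_one_neg_one ha]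
      split_ifs <;> push_cast <;> omega
    have htotal : ∑ v, f v = 4 := by
      rw [Fintype.sum_sigma, Finset.sum_congr rfl fun i _ => hpart i,
        Fin.sum_univ_eq_sum_range (fun i => if i < 2 then (2 : ℤ) else 0) k]
      obtain ⟨b, rfl⟩ := Nat.exists_eq_add_of_le hk
      rw [Finset.sum_range_add]
      rw [Finset.sum_eq_zero (s := Finset.range b) fun x _ => if_neg (by omega)]
      simp [Finset.sum_range_succ]
    have hf : ∀ v, f v = 1 ∨ f v = -1 := fun v => by
      dsimp only [f]
      split_ifs <;> simp
    refine ⟨f, hf, fun v => ?_, htotal.symm⟩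
    rw [sum_neighborFinset_completeMultipartiteGraph, htotal, hpart]
    rcases hf v with h | h <;> rw [h] <;> split_ifs <;> norm_num
  · rintro w ⟨f, hf, hdom, rfl⟩
    refine four_le_sum_of_signedDominating (by simpa using hn4) f hf fun v => ?_
    have hv := hdom v
    rwa [sum_neighborFinset_completeMultipartiteGraph] at hv
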